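/- arXiv:1907.00573 — 7 statements merged into one kernel-verified Lean document; each statement's English description precedes it below -/
import Mathlib

section
/- Let A be a unital C*-algebra, let n ≥ 1, and let p₁, …, pₙ ∈ A be projections with p_i p_j = 0 for i ≠ j and p₁ + ⋯ + pₙ = 1. Let x₁, …, xₙ ∈ A be selfadjoint elements with p_i x_i p_i = x_i for each i. Assume each x_i is invertible in the corner p_i A p_i, i.e. there exists y_i ∈ A with p_i y_i p_i = y_i and x_i y_i = y_i x_i = p_i, and assume that the spectra computed in A satisfy σ(x_i) ∩ σ(x_j) ⊆ {0} whenever i ≠ j. Set x = x₁ + ⋯ + xₙ. Then p₁, …, pₙ and x₁, …, xₙ all belong to C*(x). -/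
/-!
If `f` is continuous with `f 0 = 0`, then `f(∑ xⱼ) = ∑ pⱼ f(xⱼ)`: the idempotent `pⱼ` intertwines
`xⱼ` with `∑ xⱼ`, and by the Fuglede–Putnam–Rosenblum theorem it then intertwines their functional
calculi. Invertibility in the corner makes `σ(xᵢ) \ {0}` closed, so Urysohn's lemma yields such an
`f` equal to `1` on `σ(xᵢ) \ {0}` and vanishing on every other `σ(xⱼ)`. For this `f` the sum
collapses to `pᵢ`, and `xᵢ` is the product of `∑ xⱼ` and `pᵢ`.
-/

section IdempotentDecomposition

variable {R : Type*} [Ring R]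

lemma add_mul_one_sub_mul_add_mul_one_sub {p a b c d : R} (hp : IsIdempotentElem p)
    (hpc : Commute p c) (hpd : Commute p d) :
    (a * p + b * (1 - p)) * (c * p + d * (1 - p)) = a * c * p + b * d * (1 - p) := by
  have hqc : Commute (1 - p) c := (Commute.one_left c).sub_left hpc
  have hqd : Commute (1 - p) d := (Commute.one_left d).sub_left hpd
  rw [add_mul, mul_add, mul_add, hpc.mul_mul_mul_comm, hpd.mul_mul_mul_comm,
    hqc.mul_mul_mul_comm, hqd.mul_mul_mul_comm, hp.eq, hp.mul_one_sub_self, hp.one_sub_mul_self,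
    hp.one_sub.eq, mul_zero, mul_zero, add_zero, zero_add]

lemma isUnit_mul_add_mul_one_sub {p u v : R} (hp : IsIdempotentElem p) (hu : IsUnit u)
    (hv : IsUnit v) (hpu : Commute p u) (hpv : Commute p v) :
    IsUnit (u * p + v * (1 - p)) := by
  obtain ⟨u, rfl⟩ := hu
  obtain ⟨v, rfl⟩ := hv
  refine isUnit_iff_exists.mpr ⟨↑u⁻¹ * p + ↑v⁻¹ * (1 - p), ?_, ?_⟩
  · rw [add_mul_one_sub_mul_add_mul_one_sub hp hpu.units_inv_right hpv.units_inv_right,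
      u.mul_inv, v.mul_inv, one_mul, one_mul, add_sub_cancel]
  · rw [add_mul_one_sub_mul_add_mul_one_sub hp hpu hpv,
      u.inv_mul, v.inv_mul, one_mul, one_mul, add_sub_cancel]

lemma isUnit_add_one_sub_mul {x y : R} (hcomm : Commute x y) (hxyx : x * y * x = x) :
    IsUnit (x + (1 - x * y)) := by
  have hidem : IsIdempotentElem (x * y) := by rw [IsIdempotentElem, ← mul_assoc, hxyx]
  have hx : Commute (x * y) x := (Commute.refl x).mul_left hcomm.symm
  have hy : Commute (x * y) y := hcomm.mul_left (Commute.refl y)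
  have hsplit : x + (1 - x * y) = x * (x * y) + 1 * (1 - x * y) := by
    rw [← hx.eq, hxyx, one_mul]
  rw [hsplit]
  refine isUnit_iff_exists.mpr ⟨y * (x * y) + 1 * (1 - x * y), ?_, ?_⟩
  · rw [add_mul_one_sub_mul_add_mul_one_sub hidem hy (Commute.one_right _),
      hidem.eq, one_mul, one_mul, add_sub_cancel]
  · rw [add_mul_one_sub_mul_add_mul_one_sub hidem hx (Commute.one_right _),
      ← hcomm.eq, hidem.eq, one_mul, one_mul, add_sub_cancel]

end IdempotentDecomposition

section Spectrum

lemma spectrum_mul_diff_zero_subset {𝕜 R : Type*} [Field 𝕜] [Ring R] [Algebra 𝕜 R] {a p : R}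
    (hp : IsIdempotentElem p) (hap : Commute a p) :
    spectrum 𝕜 (a * p) \ {0} ⊆ spectrum 𝕜 a := by
  rintro l ⟨hl, hl0⟩
  contrapose! hl
  rw [spectrum.notMem_iff] at hl ⊢
  have hsplit : algebraMap 𝕜 R l - a * p =
      (algebraMap 𝕜 R l - a) * p + algebraMap 𝕜 R l * (1 - p) := by noncomm_ring
  rw [hsplit]
  have hpl : Commute p (algebraMap 𝕜 R l) := Algebra.commute_algebraMap_right l p
  exact isUnit_mul_add_mul_one_sub hp hl ((IsUnit.mk0 l hl0).map (algebraMap 𝕜 R))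
    (hpl.sub_right hap.symm) hpl

lemma isClosed_spectrum_diff_zero {𝕜 A : Type*} [NormedField 𝕜] [NormedRing A] [NormedAlgebra 𝕜 A]
    [CompleteSpace A] {x y : A} (hcomm : Commute x y) (hxyx : x * y * x = x) :
    IsClosed (spectrum 𝕜 x \ {0}) := by
  set z := x + (1 - x * y)
  have hz : (0 : 𝕜) ∉ spectrum 𝕜 z :=
    spectrum.zero_notMem 𝕜 (isUnit_add_one_sub_mul hcomm hxyx)
  have hidem : IsIdempotentElem (x * y) := by rw [IsIdempotentElem, ← mul_assoc, hxyx]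
  have hzp : z * (x * y) = x := by
    rw [add_mul, hidem.one_sub_mul_self, add_zero, hcomm.eq, ← mul_assoc, hxyx]
  have hpz : x * y * z = x := by
    rw [mul_add, hxyx, hidem.mul_one_sub_self, add_zero]
  have hsub : spectrum 𝕜 x \ {0} ⊆ spectrum 𝕜 z := by
    simpa only [hzp] using spectrum_mul_diff_zero_subset (𝕜 := 𝕜) hidem (hzp.trans hpz.symm)
  have hinter : spectrum 𝕜 x \ {0} = spectrum 𝕜 x ∩ spectrum 𝕜 z :=
    (Set.subset_inter Set.sdiff_subset hsub).antisymm
      fun l hl ↦ ⟨hl.1, fun hl0 ↦ hz (hl0 ▸ hl.2)⟩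
  rw [hinter]
  exact (spectrum.isClosed x).inter (spectrum.isClosed z)

lemma exists_continuous_eqOn_spectrum {𝕜 A ι : Type*} [RCLike 𝕜] [NormedRing A] [NormedAlgebra 𝕜 A]
    [CompleteSpace A] [Finite ι] {x : ι → A} {i : ι}
    (hclosed : IsClosed (spectrum 𝕜 (x i) \ {0}))
    (hspec : ∀ j ≠ i, spectrum 𝕜 (x j) ∩ spectrum 𝕜 (x i) ⊆ {0}) :
    ∃ f : 𝕜 → 𝕜, Continuous f ∧ f 0 = 0 ∧ Set.EqOn f 1 (spectrum 𝕜 (x i) \ {0}) ∧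
      ∀ j ≠ i, Set.EqOn f 0 (spectrum 𝕜 (x j)) := by
  let S : Set 𝕜 := {0} ∪ ⋃ j : {j // j ≠ i}, spectrum 𝕜 (x j)
  have hS : IsClosed S :=
    isClosed_singleton.union (isClosed_iUnion_of_finite fun j ↦ spectrum.isClosed _)
  have hdisj : Disjoint S (spectrum 𝕜 (x i) \ {0}) := by
    rw [Set.disjoint_left]
    rintro l (hl | hl) ⟨hli, hl0⟩
    · exact hl0 hl
    · obtain ⟨⟨j, hj⟩, hlj⟩ := Set.mem_iUnion.mp hl
      exact hl0 (hspec j hj ⟨hlj, hli⟩)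
  obtain ⟨g, hg0, hg1, -⟩ := exists_continuous_zero_one_of_isClosed hS hclosed hdisj
  refine ⟨fun t ↦ (g t : 𝕜), RCLike.continuous_ofReal.comp g.continuous, ?_, fun t ht ↦ ?_,
    fun j hj t ht ↦ ?_⟩
  · simp [hg0 (Or.inl rfl : (0 : 𝕜) ∈ S)]
  · simp [hg1 ht]
  · simp [hg0 (Or.inr (Set.mem_iUnion.mpr ⟨⟨j, hj⟩, ht⟩) : t ∈ S)]

end Spectrum

section FunctionalCalculus

variable {A : Type*} [CStarAlgebra A]

lemma semiconjBy_cfc {s a b : A} [IsStarNormal a] [IsStarNormal b] (h : SemiconjBy s a b)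
    {f : ℂ → ℂ} (hf : ContinuousOn f (spectrum ℂ a ∪ spectrum ℂ b)) :
    SemiconjBy s (cfc f a) (cfc f b) := by
  have hab : IsStarNormal (a, b) := ⟨Prod.ext (star_comm_self' a) (star_comm_self' b)⟩
  suffices ∀ w ∈ StarAlgebra.elemental ℂ (a, b), SemiconjBy s w.1 w.2 by
    simpa only [cfc_map_prod (S := ℂ) f a b hf] using this _ (cfc_mem_elemental f (a, b))
  intro w hw
  induction hw using StarAlgebra.elemental.induction_on with
  | self => exact h
  | star_self => exact h.star_right inferInstance inferInstance
  | algebraMap r => exact Algebra.commute_algebraMap_right r s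
  | add u _ v _ hu hv => exact hu.add_right hv
  | mul u _ v _ hu hv => exact hu.mul_right hv
  | closure t _ ht w hw =>
    have hclosed : IsClosed {w : A × A | s * w.1 = w.2 * s} :=
      isClosed_eq (by fun_prop) (by fun_prop)
    exact closure_minimal ht hclosed hw

lemma mul_cfc_eq_self {x : A} [IsStarNormal x] {f : ℂ → ℂ}
    (hf : ContinuousOn f (spectrum ℂ x)) (hf1 : Set.EqOn f 1 (spectrum ℂ x \ {0})) :
    x * cfc f x = x := by
  calc x * cfc f x = cfc (fun t ↦ t * f t) x := by
        rw [cfc_mul (fun t ↦ t) f x, cfc_id' ℂ x]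
    _ = cfc (fun t ↦ t) x := cfc_congr fun t ht ↦ by
        by_cases ht0 : t = 0
        · simp [ht0]
        · simp [hf1 ⟨ht, ht0⟩]
    _ = x := cfc_id' ℂ x

lemma isStarNormal_sum_of_pairwise_commute {A ι : Type*} [NonUnitalCStarAlgebra A] [Fintype ι]
    {x : ι → A} (hx : ∀ i, IsStarNormal (x i)) (hcomm : Pairwise fun i j ↦ Commute (x i) (x j)) :
    IsStarNormal (∑ i, x i) := by
  have hcomm' (i j : ι) : Commute (x i) (x j) := by
    obtain rfl | hij := eq_or_ne i j
    · exact Commute.refl _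
    · exact hcomm hij
  constructor
  rw [star_sum]
  exact Commute.sum_left _ _ _ fun i _ ↦ Commute.sum_right _ _ _ fun j _ ↦
    (hx i).commute_star_left (hcomm' i j)

end FunctionalCalculus

section Corner

section Semiring

variable {ι R : Type*} [Semiring R] {p x : ι → R}

lemma mul_eq_zero_of_mem_corner (hp : OrthogonalIdempotents p) {i j : ι} (hij : i ≠ j) {a b : R}
    (ha : a ∈ Subsemigroup.corner (p i)) (hb : b ∈ Subsemigroup.corner (p j)) : a * b = 0 := by
  rw [← ((Subsemigroup.mem_corner_iff (hp.idem i)).mp ha).2,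
    ← ((Subsemigroup.mem_corner_iff (hp.idem j)).mp hb).1, mul_assoc, ← mul_assoc (p i),
    hp.ortho hij, zero_mul, mul_zero]

lemma sum_mul_of_mem_corner [Fintype ι] (hp : OrthogonalIdempotents p)
    (hx : ∀ i, x i ∈ Subsemigroup.corner (p i)) (i : ι) : (∑ j, x j) * p i = x i := by
  have hpi : p i ∈ Subsemigroup.corner (p i) :=
    (Subsemigroup.mem_corner_iff (hp.idem i)).mpr ⟨hp.idem i, hp.idem i⟩
  rw [Finset.sum_mul,
    Fintype.sum_eq_single i fun j hji ↦ mul_eq_zero_of_mem_corner hp hji (hx j) hpi]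
  exact ((Subsemigroup.mem_corner_iff (hp.idem i)).mp (hx i)).2

end Semiring

variable {A ι : Type*} [CStarAlgebra A] [Fintype ι] {p x : ι → A}

lemma cfc_sum_of_mem_corner (hp : OrthogonalIdempotents p) (hx : ∀ i, IsStarNormal (x i))
    (hxp : ∀ i, x i ∈ Subsemigroup.corner (p i)) {f : ℂ → ℂ} (hf : Continuous f) (hf0 : f 0 = 0) :
    cfc f (∑ i, x i) = ∑ i, p i * cfc f (x i) := by
  have hcomm : Pairwise fun i j ↦ Commute (x i) (x j) := fun i j hij ↦
    (mul_eq_zero_of_mem_corner hp hij (hxp i) (hxp j)).trans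
      (mul_eq_zero_of_mem_corner hp hij.symm (hxp j) (hxp i)).symm
  have hsum : IsStarNormal (∑ i, x i) := isStarNormal_sum_of_pairwise_commute hx hcomm
  have hpiece (i : ι) : p i * cfc f (x i) = cfc f (∑ j, x j) * p i := by
    have hsemi : SemiconjBy (p i) (x i) (∑ j, x j) := by
      rw [SemiconjBy, sum_mul_of_mem_corner hp hxp]
      exact ((Subsemigroup.mem_corner_iff (hp.idem i)).mp (hxp i)).1
    exact semiconjBy_cfc hsemi hf.continuousOn
  have hrest : 0 = cfc f (∑ j, x j) * (1 - ∑ i, p i) := by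
    have hsemi : SemiconjBy (1 - ∑ i, p i) 0 (∑ j, x j) := by
      simp only [SemiconjBy, mul_sub, Finset.mul_sum, sum_mul_of_mem_corner hp hxp, mul_one,
        mul_zero, sub_self]
    simpa only [cfc_apply_zero, hf0, map_zero, mul_zero] using
      (semiconjBy_cfc hsemi hf.continuousOn).eq
  rw [mul_sub, mul_one, eq_comm, sub_eq_zero] at hrest
  rw [hrest, Finset.mul_sum]
  exact Finset.sum_congr rfl fun i _ ↦ (hpiece i).symm

theorem corner_pieces_mem_cstar_of_sum_general (hp : OrthogonalIdempotents p)
    (hx : ∀ i, IsStarNormal (x i)) (hxp : ∀ i, x i ∈ Subsemigroup.corner (p i))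
    (hinv : ∀ i, ∃ y, x i * y = p i ∧ y * x i = p i)
    (hspec : ∀ i j, i ≠ j → spectrum ℂ (x i) ∩ spectrum ℂ (x j) ⊆ {0}) (i : ι) :
    p i ∈ StarAlgebra.elemental ℂ (∑ k, x k) ∧ x i ∈ StarAlgebra.elemental ℂ (∑ k, x k) := by
  obtain ⟨y, hxy, hyx⟩ := hinv i
  have hpx : p i * x i = x i := ((Subsemigroup.mem_corner_iff (hp.idem i)).mp (hxp i)).1
  have hclosed : IsClosed (spectrum ℂ (x i) \ {0}) :=
    isClosed_spectrum_diff_zero (hxy.trans hyx.symm) (by rw [hxy, hpx])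
  obtain ⟨f, hf, hf0, hf_one, hf_zero⟩ :=
    exists_continuous_eqOn_spectrum hclosed fun j hji ↦ hspec j i hji
  have hdiag : p i * cfc f (x i) = p i := by
    rw [← hyx, mul_assoc, mul_cfc_eq_self hf.continuousOn hf_one]
  have hoff (j : ι) (hji : j ≠ i) : p j * cfc f (x j) = 0 := by
    rw [cfc_congr (hf_zero j hji), Pi.zero_def, cfc_const_zero, mul_zero]
  have hcfc : cfc f (∑ k, x k) = p i := by
    rw [cfc_sum_of_mem_corner hp hx hxp hf hf0, Fintype.sum_eq_single i hoff, hdiag]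
  have hpi : p i ∈ StarAlgebra.elemental ℂ (∑ k, x k) := hcfc ▸ cfc_mem_elemental f _
  refine ⟨hpi, ?_⟩
  rw [← sum_mul_of_mem_corner hp hxp i]
  exact mul_mem (StarAlgebra.elemental.self_mem ℂ _) hpi

end Corner

/-- In a unital C*-algebra, if `x = x₁ + ⋯ + xₙ` where the `xᵢ` are
selfadjoint elements living in the corners of mutually orthogonal projections summing
to `1`, each invertible in its corner, with pairwise almost-disjoint spectra, then all
the `pᵢ` and `xᵢ` lie in the C*-algebra generated by `x`. -/
theorem corner_pieces_mem_cstar_of_sum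
    {A : Type*} [NormedRing A] [StarRing A] [CStarRing A] [CompleteSpace A]
    [NormedAlgebra ℂ A] [StarModule ℂ A]
    (n : ℕ) (hn : 1 ≤ n) (p x : Fin n → A)
    (hp_sa : ∀ i, star (p i) = p i)
    (hp_idem : ∀ i, p i * p i = p i)
    (hp_orth : ∀ i j, i ≠ j → p i * p j = 0)
    (hp_sum : ∑ i, p i = 1)
    (hx_sa : ∀ i, star (x i) = x i)
    (hx_corner : ∀ i, p i * x i * p i = x i)
    (hx_inv : ∀ i, ∃ y : A, p i * y * p i = y ∧ x i * y = p i ∧ y * x i = p i)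
    (hspec : ∀ i j, i ≠ j → spectrum ℂ (x i) ∩ spectrum ℂ (x j) ⊆ {0}) :
    ∀ i, p i ∈ (StarAlgebra.adjoin ℂ {∑ k, x k}).topologicalClosure ∧
      x i ∈ (StarAlgebra.adjoin ℂ {∑ k, x k}).topologicalClosure := by
  let _ : CStarAlgebra A := {}
  exact corner_pieces_mem_cstar_of_sum_general ⟨hp_idem, fun i j ↦ hp_orth i j⟩
    (fun i ↦ IsSelfAdjoint.isStarNormal (hx_sa i)) (fun i ↦ ⟨x i, hx_corner i⟩)
    (fun i ↦ (hx_inv i).imp fun _ hy ↦ hy.2) hspec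
end

section
/- Let A be a unital C*-algebra carrying a system of k×k matrix units {e_{ij}}_{1≤i,j≤k}, and let q₁ ∈ A be a projection. Let S = { i ∈ {1,…,k} : e_{ii} q₁ ≠ 0 or q₁ e_{ii} ≠ 0 }. If i₁, …, i_l are l distinct indices in {1, …, k} with l ≥ |S|, then there exists a unitary u of A lying in the linear span of the e_{ij} such that the projection q := u q₁ u* satisfies e_{jj} q = 0 and q e_{jj} = 0 for every j ∉ {i₁, …, i_l}. -/
/-!
A permutation `σ` of the indices gives the unitary `u = ∑ i, e (σ i) i`, the image of a permutation
matrix. It intertwines the diagonal matrix units, `e (σ i) (σ i) * u = u * e i i`, so conjugation by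
`u` moves the set of those `i` for which `e i i` does not annihilate a given element along `σ`.
For `q₁` this set has at most as many elements as `T`, so some `σ` carries it into `T`.
-/

open Equiv (Perm)
open scoped Pointwise

theorem exists_perm_mapsTo_of_card_le {α : Type*} {s t : Finset α} (h : s.card ≤ t.card) :
    ∃ σ : Perm α, Set.MapsTo σ s t := by
  classical
  obtain ⟨t', ht', hcard⟩ := Finset.exists_subset_card_eq h
  have := Set.powersetCard.isPretransitive (α := α) (n := s.card)
  obtain ⟨σ, hσ⟩ := MulAction.exists_smul_eq (Perm α)
    (⟨s, rfl⟩ : Set.powersetCard α s.card) ⟨t', hcard⟩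
  have hst' : σ • s = t' := congrArg Subtype.val hσ
  exact ⟨σ, fun i hi => ht' (hst' ▸ Finset.smul_mem_smul_finset hi)⟩

/-- A system of matrix units indexed by `ι` in a unital star ring. Its elements may vanish, so the
zero ring carries a system of every size. -/
structure IsMatrixUnits {ι A : Type*} [Fintype ι] [DecidableEq ι] [Semiring A] [StarRing A]
    (e : ι → ι → A) : Prop where
  mul_eq : ∀ i j l m, e i j * e l m = if j = l then e i m else 0
  star_eq : ∀ i j, star (e i j) = e j i
  sum_diag : ∑ i, e i i = 1

namespace IsMatrixUnits

/-- The element of the span of the matrix units `e` given by the permutation matrix that sends the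
`i`-th basis vector to the `σ i`-th one. This matrix is `σ⁻¹.permMatrix` in Mathlib's convention,
so that `permSum e` is multiplicative. -/
def permSum {ι A : Type*} [Fintype ι] [AddCommMonoid A] (e : ι → ι → A) (σ : Perm ι) : A :=
  ∑ i, e (σ i) i

theorem permSum_mem_span (R : Type*) {ι A : Type*} [Fintype ι] [Semiring R] [AddCommMonoid A]
    [Module R A] (e : ι → ι → A) (σ : Perm ι) :
    permSum e σ ∈ Submodule.span R {a : A | ∃ i j, a = e i j} :=
  Submodule.sum_mem _ fun i _ => Submodule.subset_span ⟨σ i, i, rfl⟩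

variable {ι A : Type*} [Fintype ι] [DecidableEq ι] [Semiring A] [StarRing A] {e : ι → ι → A}

theorem permSum_one (he : IsMatrixUnits e) : permSum e 1 = 1 :=
  he.sum_diag

theorem permSum_mul_matrixUnit (he : IsMatrixUnits e) (σ : Perm ι) (i j : ι) :
    permSum e σ * e i j = e (σ i) j := by
  simp [permSum, Finset.sum_mul, he.mul_eq]

theorem matrixUnit_mul_permSum (he : IsMatrixUnits e) (σ : Perm ι) (i j : ι) :
    e i (σ j) * permSum e σ = e i j := by
  simp [permSum, Finset.mul_sum, he.mul_eq]

theorem permSum_mul_permSum (he : IsMatrixUnits e) (σ τ : Perm ι) :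
    permSum e σ * permSum e τ = permSum e (σ * τ) := by
  rw [permSum.eq_def e τ, Finset.mul_sum]
  exact Finset.sum_congr rfl fun i _ => he.permSum_mul_matrixUnit σ (τ i) i

theorem star_permSum (he : IsMatrixUnits e) (σ : Perm ι) :
    star (permSum e σ) = permSum e σ⁻¹ := by
  calc star (permSum e σ) = ∑ i, e i (σ i) := by simp only [permSum, star_sum, he.star_eq]
    _ = permSum e σ⁻¹ := Fintype.sum_equiv σ _ _ fun i => by simp

theorem permSum_mem_unitary (he : IsMatrixUnits e) (σ : Perm ι) : permSum e σ ∈ unitary A := by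
  rw [Unitary.mem_iff, he.star_permSum, he.permSum_mul_permSum, he.permSum_mul_permSum,
    inv_mul_cancel, mul_inv_cancel, he.permSum_one]
  exact ⟨rfl, rfl⟩

theorem diag_mul_permSum (he : IsMatrixUnits e) (σ : Perm ι) (i : ι) :
    e (σ i) (σ i) * permSum e σ = permSum e σ * e i i := by
  rw [he.matrixUnit_mul_permSum, he.permSum_mul_matrixUnit]

theorem star_permSum_mul_diag (he : IsMatrixUnits e) (σ : Perm ι) (i : ι) :
    star (permSum e σ) * e (σ i) (σ i) = e i i * star (permSum e σ) := by
  simpa only [star_mul, he.star_eq] using congrArg star (he.diag_mul_permSum σ i)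

theorem diag_mul_permSum_conj (he : IsMatrixUnits e) (σ : Perm ι) (i : ι) (a : A) :
    e (σ i) (σ i) * (permSum e σ * a * star (permSum e σ)) =
      permSum e σ * (e i i * a) * star (permSum e σ) := by
  simp only [← mul_assoc, he.diag_mul_permSum]

theorem permSum_conj_mul_diag (he : IsMatrixUnits e) (σ : Perm ι) (i : ι) (a : A) :
    permSum e σ * a * star (permSum e σ) * e (σ i) (σ i) =
      permSum e σ * (a * e i i) * star (permSum e σ) := by
  simp only [mul_assoc, he.star_permSum_mul_diag]

end IsMatrixUnits

open IsMatrixUnits in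
theorem exists_unitary_conjugate_projection_supported_general
    (R : Type*) {ι A : Type*} [Fintype ι] [DecidableEq ι] [Semiring R] [Semiring A] [StarRing A]
    [Module R A] {e : ι → ι → A} (he : IsMatrixUnits e) (a : A) (T : Finset ι)
    (hcard : {i : ι | e i i * a ≠ 0 ∨ a * e i i ≠ 0}.ncard ≤ T.card) :
    ∃ u ∈ unitary A,
      u ∈ Submodule.span R {b : A | ∃ i j, b = e i j} ∧
      ∀ j ∉ T, e j j * (u * a * star u) = 0 ∧ (u * a * star u) * e j j = 0 := by
  rw [Set.ncard_eq_toFinset_card] at hcard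
  obtain ⟨σ, hσ⟩ := exists_perm_mapsTo_of_card_le hcard
  refine ⟨permSum e σ, he.permSum_mem_unitary σ, permSum_mem_span R e σ, fun j hj => ?_⟩
  obtain ⟨i, rfl⟩ := σ.surjective j
  obtain ⟨hleft, hright⟩ : e i i * a = 0 ∧ a * e i i = 0 := by
    simpa using fun hi => hj (hσ hi)
  rw [he.diag_mul_permSum_conj, he.permSum_conj_mul_diag, hleft, hright]
  simp only [mul_zero, zero_mul, and_self]

/-- Given a system of `k × k` matrix units in a unital C*-algebra and a
projection `q₁`, if `T` is a set of at least `|S|` indices, where `S` is the set of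
diagonal matrix units not annihilating `q₁`, then some unitary `u` in the linear span
of the matrix units moves `q₁` to a projection `q = u q₁ u*` supported in `T`. -/
theorem exists_unitary_conjugate_projection_supported
    {A : Type*} [NormedRing A] [StarRing A] [CStarRing A] [CompleteSpace A]
    [NormedAlgebra ℂ A] [StarModule ℂ A]
    (k : ℕ) (e : Fin k → Fin k → A)
    (he_mul : ∀ i j l m, e i j * e l m = if j = l then e i m else 0)
    (he_star : ∀ i j, star (e i j) = e j i)
    (he_sum : ∑ i, e i i = 1)
    (q₁ : A) (hq_sa : star q₁ = q₁) (hq_idem : q₁ * q₁ = q₁)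
    (T : Finset (Fin k))
    (hcard : {i : Fin k | e i i * q₁ ≠ 0 ∨ q₁ * e i i ≠ 0}.ncard ≤ T.card) :
    ∃ u ∈ unitary A,
      u ∈ Submodule.span ℂ {a : A | ∃ i j, a = e i j} ∧
      ∀ j ∉ T, e j j * (u * q₁ * star u) = 0 ∧ (u * q₁ * star u) * e j j = 0 := by
  exact exists_unitary_conjugate_projection_supported_general ℂ ⟨he_mul, he_star, he_sum⟩ q₁ T hcard
end

section
/- Let A be a unital C*-algebra carrying a system of 3×3 matrix units {e_{ij}}_{1≤i,j≤3}. Let z₁, z₂ ∈ A be selfadjoint and let y ∈ A, and assume z₁, z₂, y each commute with every e_{ij}. Define a = e₁₁ + 2e₂₂ + 3e₃₃ and b = z₁e₁₁ + y e₁₂ + e₁₃ + y* e₂₁ + z₂ e₂₂ + e₂₃ + e₃₁ + e₃₂ + e₃₃. Then y, z₁, z₂, and every e_{ij} (1 ≤ i, j ≤ 3) belong to C*(a + i b). -/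
/-!
Since `b` is selfadjoint, `a` and `b` are the real and imaginary parts of `x = a + i b`, so both lie
in any star subalgebra containing `x`. Interpolating at the distinct eigenvalues `1, 2, 3` writes
each `e i i` as a polynomial in `a`. The corner `e i i * b * e j j` is the `(i, j)` entry of `b`
times `e i j`; as the last row and column of `b` consist of ones, this produces all the `e i 2` and
`e 2 j`, hence every `e i j`. Finally an entry `w` is recovered from its corner `w * e k l` as
`∑ i, e i k * (w * e k l) * e l i`.
-/

open Complex ComplexStarModule Polynomial

section RealImaginaryPart

variable {A σ : Type*} [AddCommGroup A] [Module ℂ A] [StarAddMonoid A] [StarModule ℂ A]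
  [SetLike σ A] [AddSubgroupClass σ A] [SMulMemClass σ ℂ A] [StarMemClass σ A] {s : σ}

theorem realPart_mem {x : A} (hx : x ∈ s) : (ℜ x : A) ∈ s := by
  rw [realPart_apply_coe, ← Complex.coe_smul]
  exact SMulMemClass.smul_mem _ (add_mem hx (star_mem hx))

theorem imaginaryPart_mem {x : A} (hx : x ∈ s) : (ℑ x : A) ∈ s := by
  rw [imaginaryPart_apply_coe, ← Complex.coe_smul]
  exact SMulMemClass.smul_mem _ (SMulMemClass.smul_mem _ (sub_mem hx (star_mem hx)))

variable {a b : A}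

theorem coe_realPart_add_I_smul (ha : IsSelfAdjoint a) (hb : IsSelfAdjoint b) :
    (ℜ (a + I • b) : A) = a := by
  simp [ha.coe_realPart, hb.imaginaryPart]

theorem coe_imaginaryPart_add_I_smul (ha : IsSelfAdjoint a) (hb : IsSelfAdjoint b) :
    (ℑ (a + I • b) : A) = b := by
  simp [hb.coe_realPart, ha.imaginaryPart]

end RealImaginaryPart

section Idempotents

variable {ι K A : Type*} [Fintype ι] {p : ι → A}

theorem aeval_sum_smul_of_completeOrthogonalIdempotents [CommSemiring K] [Semiring A] [Algebra K A]
    (hp : CompleteOrthogonalIdempotents p) (c : ι → K) (f : K[X]) :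
    aeval (∑ i, c i • p i) f = ∑ i, f.eval (c i) • p i := by
  classical
  induction f using Polynomial.induction_on with
  | C r => simp [← Finset.smul_sum, hp.complete, Algebra.algebraMap_eq_smul_one]
  | add f g hf hg => simp [hf, hg, add_smul, Finset.sum_add_distrib]
  | monomial n r hn =>
    rw [pow_succ', mul_left_comm, map_mul, hn, aeval_X]
    simp [Finset.sum_mul, Finset.mul_sum, hp.mul_eq, smul_smul, mul_comm (c _)]

theorem mem_of_sum_smul_mem_of_completeOrthogonalIdempotents [Field K] [Semiring A] [Algebra K A]
    (hp : CompleteOrthogonalIdempotents p) {c : ι → K} (hc : Function.Injective c)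
    {S : Subalgebra K A} (ha : ∑ i, c i • p i ∈ S) (i : ι) : p i ∈ S := by
  classical
  have h : aeval (∑ j, c j • p j) (Lagrange.basis Finset.univ c i) = p i := by
    rw [aeval_sum_smul_of_completeOrthogonalIdempotents hp, Finset.sum_eq_single i]
    · rw [Lagrange.eval_basis_self hc.injOn (Finset.mem_univ i), one_smul]
    · intro j _ hji
      rw [Lagrange.eval_basis_of_ne hji.symm (Finset.mem_univ j), zero_smul]
    · simp
  rw [← h]
  exact Algebra.adjoin_le (Set.singleton_subset_iff.2 ha) (aeval_mem_adjoin_singleton K _)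

end Idempotents

theorem isSelfAdjoint_sum_mul {n R : Type*} [Fintype n] [NonUnitalSemiring R] [StarRing R]
    {M N : Matrix n n R} (hM : M.IsHermitian) (hN : N.IsHermitian)
    (hMN : ∀ i j, Commute (M i j) (N i j)) : IsSelfAdjoint (∑ i, ∑ j, M i j * N i j) := by
  simp only [isSelfAdjoint_iff, star_sum, star_mul, hM.apply, hN.apply, ← (hMN _ _).eq]
  exact Finset.sum_comm

/-- A system of matrix units indexed by `n`, which identifies `R` with the `n × n` matrices over
the commutant of the system. The compatibility `star (e i j) = e j i` with an involution is kept
separate, so that the notion makes sense without one. -/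
structure IsMatrixUnits_s2 {n R : Type*} [Fintype n] [DecidableEq n] [Semiring R]
    (e : n → n → R) : Prop where
  mul_eq : ∀ i j k l, e i j * e k l = if j = k then e i l else 0
  sum_diag : ∑ i, e i i = 1

namespace IsMatrixUnits_s2

variable {n R : Type*} [Fintype n] [DecidableEq n]

section Semiring

variable [Semiring R] {e : n → n → R} {W : Matrix n n R}

theorem mul_same (he : IsMatrixUnits_s2 e) (i j k : n) : e i j * e j k = e i k := by
  rw [he.mul_eq, if_pos rfl]

theorem completeOrthogonalIdempotents (he : IsMatrixUnits_s2 e) :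
    CompleteOrthogonalIdempotents fun i => e i i where
  idem i := he.mul_same i i i
  ortho i j hij := by simp [he.mul_eq, hij]
  complete := he.sum_diag

theorem diag_mul_sum_mul_diag (he : IsMatrixUnits_s2 e) (hW : ∀ i j k l, Commute (W i j) (e k l))
    (i j : n) : e i i * (∑ k, ∑ l, W k l * e k l) * e j j = W i j * e i j := by
  have corner (k l : n) : e i i * (W k l * e k l) * e j j =
      if i = k then if l = j then W k l * e i j else 0 else 0 := by
    rw [← mul_assoc, ← (hW k l i i).eq, mul_assoc (W k l), he.mul_eq, mul_assoc]
    split_ifs <;> simp_all [he.mul_eq]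
  simp [Finset.mul_sum, Finset.sum_mul, corner]

theorem sum_mul_mul_eq (he : IsMatrixUnits_s2 e) {w : R} (hw : ∀ i j, Commute w (e i j)) (k l : n) :
    ∑ i, e i k * (w * e k l) * e l i = w := by
  have h (i : n) : e i k * (w * e k l) * e l i = w * e i i := by
    rw [← mul_assoc, ← (hw i k).eq, mul_assoc w, he.mul_same, mul_assoc, he.mul_same]
  simp only [h, ← Finset.mul_sum, he.sum_diag, mul_one]

variable {σ : Type*} [SetLike σ R] [NonUnitalSubsemiringClass σ R] {s : σ}

theorem entry_mul_mem (he : IsMatrixUnits_s2 e) (hW : ∀ i j k l, Commute (W i j) (e k l))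
    (hdiag : ∀ i, e i i ∈ s) (hb : ∑ i, ∑ j, W i j * e i j ∈ s) (i j : n) :
    W i j * e i j ∈ s := by
  rw [← he.diag_mul_sum_mul_diag hW]
  exact mul_mem (mul_mem (hdiag i) hb) (hdiag j)

theorem mem_of_diag_mem (he : IsMatrixUnits_s2 e) (hW : ∀ i j k l, Commute (W i j) (e k l)) {k : n}
    (hcol : ∀ i, W i k = 1) (hrow : ∀ j, W k j = 1)
    (hdiag : ∀ i, e i i ∈ s) (hb : ∑ i, ∑ j, W i j * e i j ∈ s) (i j : n) : e i j ∈ s := by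
  have hik : e i k ∈ s := by simpa [hcol] using he.entry_mul_mem hW hdiag hb i k
  have hkj : e k j ∈ s := by simpa [hrow] using he.entry_mul_mem hW hdiag hb k j
  exact he.mul_same i k j ▸ mul_mem hik hkj

theorem mem_of_mul_mem (he : IsMatrixUnits_s2 e) (hmem : ∀ i j, e i j ∈ s) {w : R}
    (hw : ∀ i j, Commute w (e i j)) {k l : n} (h : w * e k l ∈ s) : w ∈ s := by
  rw [← he.sum_mul_mul_eq hw k l]
  exact sum_mem fun i _ => mul_mem (mul_mem (hmem i k) h) (hmem l i)

end Semiring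

theorem mem_of_sum_smul_add_I_smul_mem [Ring R] [StarRing R] [Algebra ℂ R] [StarModule ℂ R]
    {e : n → n → R} {W : Matrix n n R} (he : IsMatrixUnits_s2 e)
    (he_star : ∀ i j, star (e i j) = e j i) (hW : ∀ i j k l, Commute (W i j) (e k l))
    (hW_herm : W.IsHermitian) {k : n} (hcol : ∀ i, W i k = 1)
    {c : n → ℝ} (hc : Function.Injective c) {S : StarSubalgebra ℂ R}
    (hx : ∑ i, (c i : ℂ) • e i i + I • ∑ i, ∑ j, W i j * e i j ∈ S) :
    (∀ i j, e i j ∈ S) ∧ ∀ i j, W i j ∈ S := by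
  have ha : IsSelfAdjoint (∑ i, (c i : ℂ) • e i i) := by simp [isSelfAdjoint_iff, he_star]
  have hb := isSelfAdjoint_sum_mul hW_herm (Matrix.IsHermitian.ext fun i j => he_star j i)
    fun i j => hW i j i j
  have haS : ∑ i, (c i : ℂ) • e i i ∈ S := coe_realPart_add_I_smul ha hb ▸ realPart_mem hx
  have hbS : ∑ i, ∑ j, W i j * e i j ∈ S :=
    coe_imaginaryPart_add_I_smul ha hb ▸ imaginaryPart_mem hx
  have hdiag (i : n) : e i i ∈ S :=
    mem_of_sum_smul_mem_of_completeOrthogonalIdempotents he.completeOrthogonalIdempotents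
      (ofReal_injective.comp hc) (S := S.toSubalgebra) haS i
  have hrow (j : n) : W k j = 1 := by rw [← hW_herm.apply, hcol, star_one]
  have hmem := he.mem_of_diag_mem hW hcol hrow hdiag hbS
  exact ⟨hmem, fun i j => he.mem_of_mul_mem hmem (hW i j) (he.entry_mul_mem hW hdiag hbS i j)⟩

end IsMatrixUnits_s2

theorem mem_cstar_of_three_by_three_trick_general
    {A : Type*} [Ring A] [StarRing A] [Algebra ℂ A] [StarModule ℂ A]
    (e : Fin 3 → Fin 3 → A)
    (he_mul : ∀ i j l m, e i j * e l m = if j = l then e i m else 0)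
    (he_star : ∀ i j, star (e i j) = e j i)
    (he_sum : ∑ i, e i i = 1)
    (z₁ z₂ y : A) (hz₁ : star z₁ = z₁) (hz₂ : star z₂ = z₂)
    (hz₁c : ∀ i j, z₁ * e i j = e i j * z₁)
    (hz₂c : ∀ i j, z₂ * e i j = e i j * z₂)
    (hyc : ∀ i j, y * e i j = e i j * y)
    {S : StarSubalgebra ℂ A}
    (hx : (e 0 0 + 2 * e 1 1 + 3 * e 2 2) + I •
      (z₁ * e 0 0 + y * e 0 1 + e 0 2 + star y * e 1 0 + z₂ * e 1 1 + e 1 2 +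
        e 2 0 + e 2 1 + e 2 2) ∈ S) :
    y ∈ S ∧ z₁ ∈ S ∧ z₂ ∈ S ∧ ∀ i j, e i j ∈ S := by
  let W : Matrix (Fin 3) (Fin 3) A := !![z₁, y, 1; star y, z₂, 1; 1, 1, 1]
  let c : Fin 3 → ℝ := ![1, 2, 3]
  have hyc_star (i j : Fin 3) : Commute (star y) (e i j) := by
    simpa only [he_star] using Commute.star_star (hyc j i)
  have hW (i j k l : Fin 3) : Commute (W i j) (e k l) := by
    fin_cases i <;> fin_cases j <;>
      first | exact hz₁c k l | exact hz₂c k l | exact hyc k l | exact hyc_star k l |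
        exact Commute.one_left _
  have hW_herm : W.IsHermitian := by
    ext i j
    fin_cases i <;> fin_cases j <;> simp [W, hz₁, hz₂]
  have hcol (i : Fin 3) : W i 2 = 1 := by fin_cases i <;> rfl
  have hc : Function.Injective c := by
    intro i j
    fin_cases i <;> fin_cases j <;> norm_num [c]
  have ha : ∑ i, (c i : ℂ) • e i i = e 0 0 + 2 * e 1 1 + 3 * e 2 2 := by
    simp [c, Fin.sum_univ_three, Algebra.smul_def, map_ofNat (algebraMap ℂ A)]
  have hb : ∑ i, ∑ j, W i j * e i j = z₁ * e 0 0 + y * e 0 1 + e 0 2 +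
      star y * e 1 0 + z₂ * e 1 1 + e 1 2 + e 2 0 + e 2 1 + e 2 2 := by
    simp [W, Fin.sum_univ_three, add_assoc]
  rw [← ha, ← hb] at hx
  obtain ⟨heS, hWS⟩ :=
    IsMatrixUnits_s2.mem_of_sum_smul_add_I_smul_mem ⟨he_mul, he_sum⟩ he_star hW hW_herm hcol hc hx
  exact ⟨hWS 0 1, hWS 0 0, hWS 1 1, heS⟩

/-- With 3×3 matrix units `e i j` and elements `z₁, z₂` selfadjoint and
`y`, all commuting with the matrix units, the elements `y, z₁, z₂` and all `e i j`
belong to the C*-algebra generated by `a + i b`, where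
`a = e₁₁ + 2e₂₂ + 3e₃₃` and
`b = z₁e₁₁ + y e₁₂ + e₁₃ + y* e₂₁ + z₂ e₂₂ + e₂₃ + e₃₁ + e₃₂ + e₃₃`. -/
theorem mem_cstar_of_three_by_three_trick
    {A : Type*} [NormedRing A] [StarRing A] [CStarRing A] [CompleteSpace A]
    [NormedAlgebra ℂ A] [StarModule ℂ A]
    (e : Fin 3 → Fin 3 → A)
    (he_mul : ∀ i j l m, e i j * e l m = if j = l then e i m else 0)
    (he_star : ∀ i j, star (e i j) = e j i)
    (he_sum : ∑ i, e i i = 1)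
    (z₁ z₂ y : A) (hz₁ : star z₁ = z₁) (hz₂ : star z₂ = z₂)
    (hz₁c : ∀ i j, z₁ * e i j = e i j * z₁)
    (hz₂c : ∀ i j, z₂ * e i j = e i j * z₂)
    (hyc : ∀ i j, y * e i j = e i j * y) :
    y ∈ (StarAlgebra.adjoin ℂ
        {(e 0 0 + 2 * e 1 1 + 3 * e 2 2) + Complex.I •
          (z₁ * e 0 0 + y * e 0 1 + e 0 2 + star y * e 1 0 + z₂ * e 1 1 + e 1 2 +
            e 2 0 + e 2 1 + e 2 2)}).topologicalClosure ∧
    z₁ ∈ (StarAlgebra.adjoin ℂ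
        {(e 0 0 + 2 * e 1 1 + 3 * e 2 2) + Complex.I •
          (z₁ * e 0 0 + y * e 0 1 + e 0 2 + star y * e 1 0 + z₂ * e 1 1 + e 1 2 +
            e 2 0 + e 2 1 + e 2 2)}).topologicalClosure ∧
    z₂ ∈ (StarAlgebra.adjoin ℂ
        {(e 0 0 + 2 * e 1 1 + 3 * e 2 2) + Complex.I •
          (z₁ * e 0 0 + y * e 0 1 + e 0 2 + star y * e 1 0 + z₂ * e 1 1 + e 1 2 +
            e 2 0 + e 2 1 + e 2 2)}).topologicalClosure ∧
    ∀ i j, e i j ∈ (StarAlgebra.adjoin ℂ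
        {(e 0 0 + 2 * e 1 1 + 3 * e 2 2) + Complex.I •
          (z₁ * e 0 0 + y * e 0 1 + e 0 2 + star y * e 1 0 + z₂ * e 1 1 + e 1 2 +
            e 2 0 + e 2 1 + e 2 2)}).topologicalClosure :=
  mem_cstar_of_three_by_three_trick_general e he_mul he_star he_sum z₁ z₂ y hz₁ hz₂ hz₁c hz₂c hyc
    (StarSubalgebra.le_topologicalClosure _ (StarAlgebra.self_mem_adjoin_singleton ℂ _))
end

section
/- Let A be a unital C*-algebra with a tracial state τ, and let {q_k}_{k=1}^∞ be a sequence of projections in A with Re τ(q_k) > 0 for all k. Then the set 𝒜({q_k}) := { x ∈ A : lim_{k→∞} ‖[x, q_k]‖₂ / ‖q_k‖₂ = 0 } is a norm-closed unital *-subalgebra of A: it contains 1, it is closed under addition, complex scalar multiplication, multiplication, and the adjoint operation, and it is closed in the C*-norm topology of A. -/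
open Filter Topology

/-- The trace 2-norm `‖x‖₂ = √(Re τ(x*x))` associated with a tracial state `τ`. -/
noncomputable def traceNorm2 {A : Type*} [NormedRing A] [StarRing A] [NormedAlgebra ℂ A]
    (τ : A →ₗ[ℂ] ℂ) (x : A) : ℝ :=
  Real.sqrt (τ (star x * x)).re

/-!
The quotients `x ↦ ‖[x, q_k]‖₂ / ‖q_k‖₂` form a family of seminorms on `A`, and `‖·‖₂` is the norm
of the GNS space of `τ`, on which `A` acts by operators of norm at most `‖a‖`. By traciality right
multiplication obeys the same bound, so the seminorms are dominated by `2 ‖·‖`, uniformly in `k`.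
The vectors on which an equicontinuous family of seminorms tends to zero form a closed subspace;
the Leibniz rule `[xy, q] = x[y, q] + [x, q]y` and `[x*, q] = -[x, q]*` give closure under products
and adjoints.
-/

section SeminormFamily

variable {ι 𝕜 E : Type*}

/-- The subspace of vectors on which a family of seminorms tends to zero along a filter. -/
def seminormNullSubmodule [SeminormedRing 𝕜] [AddCommGroup E] [Module 𝕜 E]
    (p : ι → Seminorm 𝕜 E) (l : Filter ι) : Submodule 𝕜 E where
  carrier := {x | Tendsto (fun i => p i x) l (𝓝 0)}
  zero_mem' := by simpa only [Set.mem_ofPred_eq, map_zero] using tendsto_const_nhds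
  add_mem' {x y} hx hy := by
    have hxy : Tendsto (fun i => p i x + p i y) l (𝓝 0) := by simpa using hx.add hy
    exact squeeze_zero (fun i => apply_nonneg _ _) (fun i => map_add_le_add _ _ _) hxy
  smul_mem' c x hx := by simpa [map_smul_eq_mul] using hx.const_mul ‖c‖

theorem isClosed_seminormNullSubmodule [SeminormedRing 𝕜] [SeminormedAddCommGroup E] [Module 𝕜 E]
    {p : ι → Seminorm 𝕜 E} {C : NNReal} (hp : ∀ i x, p i x ≤ C * ‖x‖) (l : Filter ι) :
    IsClosed (seminormNullSubmodule p l : Set E) := by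
  have lipschitz (i : ι) : LipschitzWith C (p i) := LipschitzWith.of_le_add_mul C fun x y =>
    calc
      p i x ≤ p i y + p i (x - y) := le_map_add_map_sub _ _ _
      _ ≤ p i y + C * dist x y := by rw [dist_eq_norm]; gcongr; exact hp i _
  exact (LipschitzWith.uniformEquicontinuous (fun i => ⇑(p i)) C
    lipschitz).equicontinuous.isClosed_setOfPred_tendsto continuous_const

end SeminormFamily

theorem commutator_mul {R : Type*} [NonUnitalRing R] (x y q : R) :
    x * y * q - q * (x * y) = x * (y * q - q * y) + (x * q - q * x) * y := by
  noncomm_ring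

section Trace

open scoped ComplexOrder

variable {A : Type*}

theorem traceNorm2_star [NormedRing A] [StarRing A] [NormedAlgebra ℂ A] {τ : A →ₗ[ℂ] ℂ}
    (hτ : ∀ x y, τ (x * y) = τ (y * x)) (x : A) : traceNorm2 τ (star x) = traceNorm2 τ x := by
  rw [traceNorm2, traceNorm2, star_star, hτ]

theorem traceNorm2_pos_of_isStarProjection [NormedRing A] [StarRing A] [NormedAlgebra ℂ A]
    {τ : A →ₗ[ℂ] ℂ} {q : A} (hq : IsStarProjection q) (hτq : 0 < (τ q).re) :
    0 < traceNorm2 τ q := by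
  rwa [traceNorm2, hq.isSelfAdjoint.star_eq, hq.isIdempotentElem.eq, Real.sqrt_pos]

variable [CStarAlgebra A] [PartialOrder A] [StarOrderedRing A] (τ : A →ₚ[ℂ] ℂ)

theorem traceNorm2_eq_norm_toPreGNS (x : A) :
    traceNorm2 τ.toLinearMap x = ‖τ.toPreGNS x‖ :=
  rfl

theorem traceNorm2_mul_le_left (a x : A) :
    traceNorm2 τ.toLinearMap (a * x) ≤ ‖a‖ * traceNorm2 τ.toLinearMap x :=
  (τ.leftMulMapPreGNS a).le_of_opNorm_le
    (LinearMap.mkContinuous_norm_le _ (norm_nonneg a) _) (τ.toPreGNS x)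

theorem traceNorm2_add_le (x y : A) :
    traceNorm2 τ.toLinearMap (x + y) ≤
      traceNorm2 τ.toLinearMap x + traceNorm2 τ.toLinearMap y := by
  simpa only [traceNorm2_eq_norm_toPreGNS, map_add] using norm_add_le _ _

theorem traceNorm2_smul (c : ℂ) (x : A) :
    traceNorm2 τ.toLinearMap (c • x) = ‖c‖ * traceNorm2 τ.toLinearMap x := by
  simp only [traceNorm2_eq_norm_toPreGNS, map_smul, norm_smul]

variable {τ}

theorem traceNorm2_mul_le_right (hτ : ∀ x y, τ (x * y) = τ (y * x)) (x a : A) :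
    traceNorm2 τ.toLinearMap (x * a) ≤ traceNorm2 τ.toLinearMap x * ‖a‖ := by
  rw [← traceNorm2_star hτ, star_mul, ← traceNorm2_star hτ x, ← norm_star a, mul_comm _ ‖star a‖]
  exact traceNorm2_mul_le_left τ _ _

variable (τ) in
/-- The seminorm `x ↦ ‖[x, q]‖₂ / ‖q‖₂`, with junk value `0` if `‖q‖₂ = 0`. It measures how far
`x` is from commuting with `q`, relative to the size of `q`. -/
noncomputable def commutatorSeminorm (q : A) : Seminorm ℂ A :=
  .of (fun x => traceNorm2 τ.toLinearMap (x * q - q * x) / traceNorm2 τ.toLinearMap q)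
    (fun x y => by
      have hxy : (x + y) * q - q * (x + y) = (x * q - q * x) + (y * q - q * y) := by
        noncomm_ring
      rw [hxy, ← add_div]
      exact div_le_div_of_nonneg_right (traceNorm2_add_le τ _ _) (Real.sqrt_nonneg _))
    (fun c x => by
      rw [smul_mul_assoc, mul_smul_comm, ← smul_sub, traceNorm2_smul, mul_div_assoc])

theorem commutatorSeminorm_apply (q x : A) :
    commutatorSeminorm τ q x =
      traceNorm2 τ.toLinearMap (x * q - q * x) / traceNorm2 τ.toLinearMap q :=
  rfl

theorem commutatorSeminorm_one (q : A) : commutatorSeminorm τ q 1 = 0 := by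
  simp [commutatorSeminorm_apply, traceNorm2]

theorem commutatorSeminorm_star (hτ : ∀ x y, τ (x * y) = τ (y * x)) {q : A}
    (hq : IsSelfAdjoint q) (x : A) :
    commutatorSeminorm τ q (star x) = commutatorSeminorm τ q x := by
  have hx : star (x * q - q * x) = -(star x * q - q * star x) := by
    rw [star_sub, star_mul, star_mul, hq.star_eq, neg_sub]
  rw [commutatorSeminorm_apply, commutatorSeminorm_apply, ← traceNorm2_star hτ (x * q - q * x), hx,
    traceNorm2_eq_norm_toPreGNS, traceNorm2_eq_norm_toPreGNS _ (-_), map_neg, norm_neg]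

theorem commutatorSeminorm_mul_le (hτ : ∀ x y, τ (x * y) = τ (y * x)) (q x y : A) :
    commutatorSeminorm τ q (x * y) ≤
      ‖x‖ * commutatorSeminorm τ q y + commutatorSeminorm τ q x * ‖y‖ := by
  simp only [commutatorSeminorm_apply]
  rw [← mul_div_assoc, div_mul_eq_mul_div, ← add_div, commutator_mul]
  refine div_le_div_of_nonneg_right ?_ (Real.sqrt_nonneg _)
  exact (traceNorm2_add_le τ _ _).trans
    (add_le_add (traceNorm2_mul_le_left τ _ _) (traceNorm2_mul_le_right hτ _ _))

theorem commutatorSeminorm_le_two_mul_norm (hτ : ∀ x y, τ (x * y) = τ (y * x)) {q : A}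
    (hq : 0 < traceNorm2 τ.toLinearMap q) (x : A) :
    commutatorSeminorm τ q x ≤ 2 * ‖x‖ := by
  have hsub : traceNorm2 τ.toLinearMap (x * q - q * x) ≤
      traceNorm2 τ.toLinearMap (x * q) + traceNorm2 τ.toLinearMap (q * x) := by
    simpa only [traceNorm2_eq_norm_toPreGNS, map_sub] using norm_sub_le _ _
  rw [commutatorSeminorm_apply, div_le_iff₀ hq]
  linarith [traceNorm2_mul_le_left τ x q, traceNorm2_mul_le_right hτ q x]

/-- The star subalgebra of elements commuting asymptotically, relative to `‖q i‖₂`, with a family of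
self-adjoint elements `q i` along a filter; `𝒜({q_k})` is the case of `atTop` on `ℕ`. -/
noncomputable def asymptoticCommutant {ι : Type*} (hτ : ∀ x y, τ (x * y) = τ (y * x)) {q : ι → A}
    (hq : ∀ i, IsSelfAdjoint (q i)) (l : Filter ι) : StarSubalgebra ℂ A where
  __ := (seminormNullSubmodule (fun i => commutatorSeminorm τ (q i)) l).toSubalgebra
    (by
      change Tendsto (fun i => commutatorSeminorm τ (q i) 1) l (𝓝 0)
      simpa only [commutatorSeminorm_one] using tendsto_const_nhds)
    (fun x y hx hy => by
      have hxy := (hy.const_mul ‖x‖).add (hx.mul_const ‖y‖)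
      rw [mul_zero, zero_mul, add_zero] at hxy
      exact squeeze_zero (fun i => apply_nonneg _ _)
        (fun i => commutatorSeminorm_mul_le hτ (q i) x y) hxy)
  star_mem' {x} hx := hx.congr fun i => (commutatorSeminorm_star hτ (hq i) x).symm

theorem isClosed_asymptoticCommutant {ι : Type*} (hτ : ∀ x y, τ (x * y) = τ (y * x)) {q : ι → A}
    (hq : ∀ i, IsSelfAdjoint (q i)) (hq_pos : ∀ i, 0 < traceNorm2 τ.toLinearMap (q i))
    (l : Filter ι) : IsClosed (asymptoticCommutant hτ hq l : Set A) :=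
  isClosed_seminormNullSubmodule (C := 2)
    (fun i => commutatorSeminorm_le_two_mul_norm hτ (hq_pos i)) l

end Trace

open scoped ComplexOrder in
theorem asymptotic_commutant_is_closed_star_subalgebra_general
    {A : Type*} [NormedRing A] [StarRing A] [CStarRing A] [CompleteSpace A]
    [NormedAlgebra ℂ A] [StarModule ℂ A] (τ : A →ₗ[ℂ] ℂ)
    (hτ_nonneg : ∀ x : A, 0 ≤ τ (star x * x)) (hτ_trace : ∀ x y : A, τ (x * y) = τ (y * x))
    {ι : Type*} (q : ι → A) (hq : ∀ i, IsSelfAdjoint (q i))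
    (hq_pos : ∀ i, 0 < traceNorm2 τ (q i)) (l : Filter ι) :
    ∃ S : StarSubalgebra ℂ A,
      (S : Set A) = {x : A | Tendsto
        (fun i => traceNorm2 τ (x * q i - q i * x) / traceNorm2 τ (q i)) l (𝓝 0)} ∧
      IsClosed (S : Set A) := by
  let : CStarAlgebra A := {}
  let := CStarAlgebra.spectralOrder A
  have := CStarAlgebra.spectralOrderedRing A
  let φ : A →ₚ[ℂ] ℂ := .mk₀ τ fun a ha => by
    obtain ⟨x, rfl⟩ := CStarAlgebra.nonneg_iff_eq_star_mul_self.mp ha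
    exact hτ_nonneg x
  exact ⟨asymptoticCommutant (τ := φ) hτ_trace hq l, rfl,
    isClosed_asymptoticCommutant hτ_trace hq hq_pos l⟩

/-- Given a sequence of projections `q k` with positive trace, the set
`𝒜({q_k}) = { x : ‖[x,q_k]‖₂/‖q_k‖₂ → 0 }` is a norm-closed unital *-subalgebra. -/
theorem asymptotic_commutant_is_closed_star_subalgebra
    {A : Type*} [NormedRing A] [StarRing A] [CStarRing A] [CompleteSpace A]
    [NormedAlgebra ℂ A] [StarModule ℂ A]
    (τ : A →ₗ[ℂ] ℂ)
    (hτ1 : τ 1 = 1)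
    (hτpos : ∀ x : A, 0 ≤ (τ (star x * x)).re)
    (hτreal : ∀ x : A, (τ (star x * x)).im = 0)
    (hτtr : ∀ x y : A, τ (x * y) = τ (y * x))
    (q : ℕ → A)
    (hq_sa : ∀ k, star (q k) = q k)
    (hq_idem : ∀ k, q k * q k = q k)
    (hq_pos : ∀ k, 0 < (τ (q k)).re) :
    (1 : A) ∈ {x : A | Tendsto
        (fun k => traceNorm2 τ (x * q k - q k * x) / traceNorm2 τ (q k)) atTop (𝓝 0)} ∧
    (∀ x ∈ {x : A | Tendsto
        (fun k => traceNorm2 τ (x * q k - q k * x) / traceNorm2 τ (q k)) atTop (𝓝 0)},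
      ∀ y ∈ {x : A | Tendsto
        (fun k => traceNorm2 τ (x * q k - q k * x) / traceNorm2 τ (q k)) atTop (𝓝 0)},
        x + y ∈ {x : A | Tendsto
        (fun k => traceNorm2 τ (x * q k - q k * x) / traceNorm2 τ (q k)) atTop (𝓝 0)}) ∧
    (∀ (c : ℂ), ∀ x ∈ {x : A | Tendsto
        (fun k => traceNorm2 τ (x * q k - q k * x) / traceNorm2 τ (q k)) atTop (𝓝 0)},
        c • x ∈ {x : A | Tendsto
        (fun k => traceNorm2 τ (x * q k - q k * x) / traceNorm2 τ (q k)) atTop (𝓝 0)}) ∧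
    (∀ x ∈ {x : A | Tendsto
        (fun k => traceNorm2 τ (x * q k - q k * x) / traceNorm2 τ (q k)) atTop (𝓝 0)},
      ∀ y ∈ {x : A | Tendsto
        (fun k => traceNorm2 τ (x * q k - q k * x) / traceNorm2 τ (q k)) atTop (𝓝 0)},
        x * y ∈ {x : A | Tendsto
        (fun k => traceNorm2 τ (x * q k - q k * x) / traceNorm2 τ (q k)) atTop (𝓝 0)}) ∧
    (∀ x ∈ {x : A | Tendsto
        (fun k => traceNorm2 τ (x * q k - q k * x) / traceNorm2 τ (q k)) atTop (𝓝 0)},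
        star x ∈ {x : A | Tendsto
        (fun k => traceNorm2 τ (x * q k - q k * x) / traceNorm2 τ (q k)) atTop (𝓝 0)}) ∧
    IsClosed {x : A | Tendsto
        (fun k => traceNorm2 τ (x * q k - q k * x) / traceNorm2 τ (q k)) atTop (𝓝 0)} := by
  obtain ⟨S, hS, hS_closed⟩ := asymptotic_commutant_is_closed_star_subalgebra_general τ
    (fun x => Complex.nonneg_iff.mpr ⟨hτpos x, (hτreal x).symm⟩) hτtr q hq_sa
    (fun k => traceNorm2_pos_of_isStarProjection ⟨hq_idem k, hq_sa k⟩ (hq_pos k)) atTop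
  rw [← hS]
  exact ⟨S.one_mem, fun _ hx _ hy => S.add_mem hx hy, fun c _ hx => S.smul_mem hx c,
    fun _ hx _ hy => S.mul_mem hx hy, fun _ hx => star_mem hx, hS_closed⟩
end

section
/- Let A be a unital C*-algebra with a tracial state τ, and let {q_k}_{k=1}^∞ be a sequence of projections in A with Re τ(q_k) > 0 for all k. Let p be a projection in A with lim_{k→∞} ‖[p, q_k]‖₂ / ‖q_k‖₂ = 0, and let x ∈ A with lim_{k→∞} ‖[x, q_k]‖₂ / ‖q_k‖₂ = 0. Then lim_{k→∞} ‖[p x p, p q_k p]‖₂ / ‖q_k‖₂ = 0. -/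
open Filter Topology

/-!
The elements asymptotically commuting with `q` are closed under products: expand `[ab, q]` by the
Leibniz rule and use that multiplication is bounded for `‖·‖₂`. Left multiplication is bounded
because the GNS representation is, and traciality transfers this to right multiplication. Hence
`y = p x p` asymptotically commutes with `q`, and `p y = y = y p` gives `[y, p q p] = p [y, q] p`.
-/

open Asymptotics
open scoped ComplexOrder

section TraceNorm

variable {A : Type*} [NormedRing A] [StarRing A] [NormedAlgebra ℂ A] {τ : A →ₗ[ℂ] ℂ}

lemma traceNorm2_nonneg (τ : A →ₗ[ℂ] ℂ) (a : A) : 0 ≤ traceNorm2 τ a := Real.sqrt_nonneg _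

lemma traceNorm2_of_isStarProjection {p : A} (hp : IsStarProjection p) :
    traceNorm2 τ p = √(τ p).re := by
  rw [traceNorm2, hp.isSelfAdjoint.star_eq, hp.isIdempotentElem.eq]

lemma traceNorm2_star_s4 (hτ : ∀ a b, τ (a * b) = τ (b * a)) (a : A) :
    traceNorm2 τ (star a) = traceNorm2 τ a := by
  rw [traceNorm2, traceNorm2, star_star, hτ]

end TraceNorm

section PositiveFunctional

variable {A : Type*} [CStarAlgebra A] [PartialOrder A] [StarOrderedRing A]

lemma exists_positiveLinearMap_toLinearMap_eq {τ : A →ₗ[ℂ] ℂ} (hτ : ∀ a, 0 ≤ τ (star a * a)) :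
    ∃ f : A →ₚ[ℂ] ℂ, f.toLinearMap = τ := by
  refine ⟨.mk₀ τ fun a ha => ?_, rfl⟩
  obtain ⟨b, rfl⟩ := CStarAlgebra.nonneg_iff_eq_star_mul_self.mp ha
  exact hτ b

variable (f : A →ₚ[ℂ] ℂ)

lemma traceNorm2_eq_norm_toPreGNS_s4 (a : A) : traceNorm2 f.toLinearMap a = ‖f.toPreGNS a‖ := rfl

lemma traceNorm2_add_le_s4 (a b : A) :
    traceNorm2 f.toLinearMap (a + b) ≤ traceNorm2 f.toLinearMap a + traceNorm2 f.toLinearMap b := by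
  simpa only [traceNorm2_eq_norm_toPreGNS_s4, map_add] using norm_add_le _ _

lemma traceNorm2_mul_le_norm_mul (a b : A) :
    traceNorm2 f.toLinearMap (a * b) ≤ ‖a‖ * traceNorm2 f.toLinearMap b := by
  have hπ : ‖f.gnsStarAlgHom a‖ ≤ ‖a‖ := NonUnitalStarAlgHom.norm_apply_le _ a
  simpa [traceNorm2_eq_norm_toPreGNS_s4] using
    (f.gnsStarAlgHom a).le_of_opNorm_le hπ (f.toPreGNS b)

variable {f}

lemma traceNorm2_mul_le_mul_norm (hf : ∀ a b, f (a * b) = f (b * a)) (a b : A) :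
    traceNorm2 f.toLinearMap (a * b) ≤ traceNorm2 f.toLinearMap a * ‖b‖ :=
  calc traceNorm2 f.toLinearMap (a * b)
      = traceNorm2 f.toLinearMap (star b * star a) := by rw [← star_mul, traceNorm2_star_s4 hf]
    _ ≤ ‖star b‖ * traceNorm2 f.toLinearMap (star a) := traceNorm2_mul_le_norm_mul f _ _
    _ = traceNorm2 f.toLinearMap a * ‖b‖ := by rw [norm_star, traceNorm2_star_s4 hf, mul_comm]

end PositiveFunctional

section AsymptoticCommutation

variable {A ι : Type*}

/-- The element `a` asymptotically commutes with the family `q` along `l`: `‖[a, q i]‖₂ = o(r i)`.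
The scale `r` is independent of `q` so that `q i` can be replaced by `p * q i * p` while still
comparing with `‖q i‖₂`. -/
def AsymptoticallyCommutes [NormedRing A] [StarRing A] [NormedAlgebra ℂ A] (τ : A →ₗ[ℂ] ℂ)
    (l : Filter ι) (r : ι → ℝ) (q : ι → A) (a : A) : Prop :=
  (fun i => traceNorm2 τ (a * q i - q i * a)) =o[l] r

lemma asymptoticallyCommutes_iff_tendsto_div [NormedRing A] [StarRing A] [NormedAlgebra ℂ A]
    {τ : A →ₗ[ℂ] ℂ} {l : Filter ι} {r : ι → ℝ} {q : ι → A} {a : A} (hr : ∀ i, r i ≠ 0) :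
    AsymptoticallyCommutes τ l r q a ↔
      Tendsto (fun i => traceNorm2 τ (a * q i - q i * a) / r i) l (𝓝 0) :=
  isLittleO_iff_tendsto fun i hi => absurd hi (hr i)

namespace AsymptoticallyCommutes

variable [CStarAlgebra A] [PartialOrder A] [StarOrderedRing A] {f : A →ₚ[ℂ] ℂ} {l : Filter ι}
  {r : ι → ℝ} {q : ι → A} {a b p : A}

lemma mul (hf : ∀ a b, f (a * b) = f (b * a)) (ha : AsymptoticallyCommutes f.toLinearMap l r q a)
    (hb : AsymptoticallyCommutes f.toLinearMap l r q b) :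
    AsymptoticallyCommutes f.toLinearMap l r q (a * b) := by
  refine (IsBigO.of_norm_le fun i => ?_).trans_isLittleO
    ((hb.const_mul_left ‖a‖).add (ha.const_mul_left ‖b‖))
  have leibniz : a * b * q i - q i * (a * b) =
      a * (b * q i - q i * b) + (a * q i - q i * a) * b := by noncomm_ring
  rw [Real.norm_of_nonneg (traceNorm2_nonneg _ _), leibniz, mul_comm ‖b‖]
  exact (traceNorm2_add_le_s4 f _ _).trans
    (add_le_add (traceNorm2_mul_le_norm_mul f _ _) (traceNorm2_mul_le_mul_norm hf _ _))

lemma compress (hf : ∀ a b, f (a * b) = f (b * a))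
    (ha : AsymptoticallyCommutes f.toLinearMap l r q a) (hpa : p * a = a) (hap : a * p = a) :
    AsymptoticallyCommutes f.toLinearMap l r (fun i => p * q i * p) a := by
  refine (IsBigO.of_norm_le fun i => ?_).trans_isLittleO (ha.const_mul_left (‖p‖ * ‖p‖))
  have corner : a * (p * q i * p) - p * q i * p * a = p * (a * q i - q i * a) * p :=
    calc a * (p * q i * p) - p * q i * p * a
        = (a * p) * q i * p - p * q i * (p * a) := by noncomm_ring
      _ = (p * a) * q i * p - p * q i * (a * p) := by rw [hpa, hap]
      _ = p * (a * q i - q i * a) * p := by noncomm_ring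
  rw [Real.norm_of_nonneg (traceNorm2_nonneg _ _), corner]
  calc traceNorm2 f.toLinearMap (p * (a * q i - q i * a) * p)
      ≤ traceNorm2 f.toLinearMap (p * (a * q i - q i * a)) * ‖p‖ :=
        traceNorm2_mul_le_mul_norm hf _ _
    _ ≤ ‖p‖ * traceNorm2 f.toLinearMap (a * q i - q i * a) * ‖p‖ := by
        gcongr
        exact traceNorm2_mul_le_norm_mul f _ _
    _ = ‖p‖ * ‖p‖ * traceNorm2 f.toLinearMap (a * q i - q i * a) := by ring

end AsymptoticallyCommutes

end AsymptoticCommutation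

theorem corner_asymptotic_commutation_general {A ι : Type*} [CStarAlgebra A] {τ : A →ₗ[ℂ] ℂ}
    (hτpos : ∀ a, 0 ≤ τ (star a * a)) (hτtr : ∀ a b, τ (a * b) = τ (b * a))
    {l : Filter ι} {r : ι → ℝ} {q : ι → A} {p x : A} (hp_idem : IsIdempotentElem p)
    (hp : AsymptoticallyCommutes τ l r q p) (hx : AsymptoticallyCommutes τ l r q x) :
    AsymptoticallyCommutes τ l r (fun i => p * q i * p) (p * x * p) := by
  let : PartialOrder A := CStarAlgebra.spectralOrder A
  have : StarOrderedRing A := CStarAlgebra.spectralOrderedRing A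
  obtain ⟨f, rfl⟩ := exists_positiveLinearMap_toLinearMap_eq hτpos
  have hpxp : AsymptoticallyCommutes f.toLinearMap l r q (p * x * p) := (hp.mul hτtr hx).mul hτtr hp
  refine hpxp.compress hτtr ?_ ?_
  · rw [← mul_assoc, ← mul_assoc, hp_idem.eq]
  · rw [mul_assoc, hp_idem.eq]

/-- If a projection `p` and an element `x` both asymptotically commute
with projections `q k` (relative to `‖q_k‖₂`), then
`‖[p x p, p q_k p]‖₂ / ‖q_k‖₂ → 0`. -/
theorem corner_asymptotic_commutation
    {A : Type*} [NormedRing A] [StarRing A] [CStarRing A] [CompleteSpace A]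
    [NormedAlgebra ℂ A] [StarModule ℂ A]
    (τ : A →ₗ[ℂ] ℂ)
    (hτ1 : τ 1 = 1)
    (hτpos : ∀ x : A, 0 ≤ (τ (star x * x)).re)
    (hτreal : ∀ x : A, (τ (star x * x)).im = 0)
    (hτtr : ∀ x y : A, τ (x * y) = τ (y * x))
    (q : ℕ → A)
    (hq_sa : ∀ k, star (q k) = q k)
    (hq_idem : ∀ k, q k * q k = q k)
    (hq_pos : ∀ k, 0 < (τ (q k)).re)
    (p : A) (hp_sa : star p = p) (hp_idem : p * p = p)
    (hp_lim : Tendsto (fun k => traceNorm2 τ (p * q k - q k * p) / traceNorm2 τ (q k))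
      atTop (𝓝 0))
    (x : A)
    (hx_lim : Tendsto (fun k => traceNorm2 τ (x * q k - q k * x) / traceNorm2 τ (q k))
      atTop (𝓝 0)) :
    Tendsto (fun k =>
        traceNorm2 τ ((p * x * p) * (p * q k * p) - (p * q k * p) * (p * x * p)) /
          traceNorm2 τ (q k)) atTop (𝓝 0) := by
  let : CStarAlgebra A := {}
  have hq_ne (k : ℕ) : traceNorm2 τ (q k) ≠ 0 := by
    rw [traceNorm2_of_isStarProjection ⟨hq_idem k, hq_sa k⟩]
    exact (Real.sqrt_pos.2 (hq_pos k)).ne'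
  have hτ (a : A) : 0 ≤ τ (star a * a) := Complex.nonneg_iff.2 ⟨hτpos a, (hτreal a).symm⟩
  simp only [← asymptoticallyCommutes_iff_tendsto_div hq_ne] at hp_lim hx_lim
  exact (asymptoticallyCommutes_iff_tendsto_div hq_ne).1
    (corner_asymptotic_commutation_general hτ hτtr hp_idem hp_lim hx_lim)
end

section
/- Let μ be a Borel probability measure on ℝ with μ([0,1]) = 1. Then ∫ (t − 1_{(1/2,1]}(t))² dμ(t) ≤ 4 ∫ (t − t²)² dμ(t), where 1_{(1/2,1]} denotes the indicator function of the interval (1/2, 1]. -/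
open MeasureTheory

theorem abs_sub_indicator_Ioc_half_one_le {𝕜 : Type*} [Field 𝕜] [LinearOrder 𝕜]
    [IsStrictOrderedRing 𝕜] {t : 𝕜} (ht : t ≤ 1) :
    |t - Set.indicator (Set.Ioc (1 / 2) 1) (fun _ => 1) t| ≤ 2 * |t - t ^ 2| := by
  -- One factor of `t (1 - t)` is, up to sign, the left-hand side; the other is at least `1 / 2`.
  have hfactor : |t - t ^ 2| = |t| * |1 - t| := by rw [← abs_mul]; ring_nf
  rw [hfactor]
  rcases lt_or_ge (1 / 2) t with hhalf | hhalf
  · have hone : 1 ≤ 2 * |t| := by linarith [le_abs_self t]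
    rw [Set.indicator_of_mem (show t ∈ Set.Ioc (1 / 2) 1 from ⟨hhalf, ht⟩)]
    calc |t - 1| = |1 - t| := abs_sub_comm t 1
      _ ≤ 2 * |t| * |1 - t| := le_mul_of_one_le_left (abs_nonneg _) hone
      _ = 2 * (|t| * |1 - t|) := mul_assoc _ _ _
  · have hone : 1 ≤ 2 * |1 - t| := by linarith [le_abs_self (1 - t)]
    rw [Set.indicator_of_notMem fun hmem => hhalf.not_gt hmem.1, sub_zero]
    calc |t| ≤ |t| * (2 * |1 - t|) := le_mul_of_one_le_right (abs_nonneg _) hone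
      _ = 2 * (|t| * |1 - t|) := mul_left_comm _ _ _

theorem integrable_of_continuousOn_of_ae_mem_isCompact {X E : Type*} [TopologicalSpace X]
    [T2Space X] [MeasurableSpace X] [OpensMeasurableSpace X] [NormedAddCommGroup E]
    {μ : Measure X} [IsFiniteMeasureOnCompacts μ] {K : Set X} {f : X → E}
    (hf : ContinuousOn f K) (hK : IsCompact K) (hμ : ∀ᵐ x ∂μ, x ∈ K) : Integrable f μ := by
  rw [← Measure.restrict_eq_self_of_ae_mem hμ]
  exact hf.integrableOn_compact hK

theorem integral_sq_dist_indicator_le_general {μ : Measure ℝ} (hμ : ∀ᵐ t ∂μ, t ≤ 1)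
    (hint : Integrable (fun t => (t - t ^ 2) ^ 2) μ) :
    ∫ t, (t - Set.indicator (Set.Ioc (1 / 2 : ℝ) 1) (fun _ => (1 : ℝ)) t) ^ 2 ∂μ ≤
      4 * ∫ t, (t - t ^ 2) ^ 2 ∂μ := by
  rw [← integral_const_mul]
  refine integral_mono_of_nonneg (.of_forall fun _ => sq_nonneg _) (hint.const_mul 4) ?_
  filter_upwards [hμ] with t ht
  obtain ⟨hlower, hupper⟩ := abs_le.1 (abs_sub_indicator_Ioc_half_one_le ht)
  calc (t - Set.indicator (Set.Ioc (1 / 2 : ℝ) 1) (fun _ => (1 : ℝ)) t) ^ 2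
      ≤ (2 * |t - t ^ 2|) ^ 2 := sq_le_sq' hlower hupper
    _ = 4 * (t - t ^ 2) ^ 2 := by rw [mul_pow, sq_abs]; norm_num

/-- For a Borel probability measure `μ` on `ℝ` supported in `[0,1]`,
`∫ (t − 1_{(1/2,1]}(t))² dμ ≤ 4 ∫ (t − t²)² dμ`. -/
theorem integral_sq_dist_indicator_le
    (μ : Measure ℝ) [IsProbabilityMeasure μ] (hμ : μ (Set.Icc 0 1) = 1) :
    ∫ t, (t - Set.indicator (Set.Ioc (1/2 : ℝ) 1) (fun _ => (1 : ℝ)) t) ^ 2 ∂μ ≤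
      4 * ∫ t, (t - t ^ 2) ^ 2 ∂μ := by
  have hsupp : ∀ᵐ t ∂μ, t ∈ Set.Icc (0 : ℝ) 1 := (mem_ae_iff_prob_eq_one measurableSet_Icc).2 hμ
  exact integral_sq_dist_indicator_le_general (hsupp.mono fun _ ht => ht.2)
    (integrable_of_continuousOn_of_ae_mem_isCompact (by fun_prop) isCompact_Icc hsupp)
end

section
/- Let A be a unital C*-algebra with a tracial state τ, let m ≥ 1, and let {p_{ij}}_{1≤i,j≤m} be a system of m×m matrix units in A. Let {q_k}_{k=1}^∞ be a sequence of projections in A with Re τ(q_k) > 0 for all k, and assume lim_{k→∞} ‖[p_{ij}, q_k]‖₂ / ‖q_k‖₂ = 0 for all 1 ≤ i, j ≤ m. Let p be a projection in A with p p₁₁ = p₁₁ (i.e. p ≥ p₁₁) and lim_{k→∞} ‖[p, q_k]‖₂ / ‖q_k‖₂ = 0. Then liminf_{k→∞} ‖p q_k p‖₂² / ‖q_k‖₂² ≥ 1/m. -/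
open Filter Topology

/-!
Write the identity as `∑ vᵢ* vᵢ` with `p vᵢ = vᵢ`; for matrix units, `vᵢ = p₁ᵢ`. Since the `vᵢ`
almost commute with `q`, traciality gives `τ(vᵢ* vᵢ q) ≤ τ(vᵢ vᵢ* q) + ‖[vᵢ, q]‖₂²`, and
`vᵢ vᵢ* ≤ p`, so that summing over the `m` indices yields `τ(q) ≤ m τ(pq) + o(τ(q))`.
Finally `τ(pq) = ‖pqp‖₂² + ½ ‖[p, q]‖₂²`, where the commutator is negligible too.
-/

/-- A positive trace on a star ring. It is only additive and real-valued; the model is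
the real part of a tracial state on a C⋆-algebra. -/
structure IsPositiveTrace {R : Type*} [NonUnitalRing R] [StarRing R] (φ : R →+ ℝ) : Prop where
  star_mul_self_nonneg : ∀ x, 0 ≤ φ (star x * x)
  mul_comm : ∀ x y, φ (x * y) = φ (y * x)

/-- The 2-seminorm `√φ(x*x)` associated with a positive trace `φ`, the analogue of `traceNorm2`
for additive functionals. -/
noncomputable def tracialSeminorm {R : Type*} [NonUnitalRing R] [StarRing R] (φ : R →+ ℝ)
    (x : R) : ℝ :=
  √(φ (star x * x))

namespace IsPositiveTrace

section NonUnitalRing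

variable {R : Type*} [NonUnitalRing R] [StarRing R] {φ : R →+ ℝ} {p q : R}

lemma sq_tracialSeminorm (hφ : IsPositiveTrace φ) (x : R) :
    tracialSeminorm φ x ^ 2 = φ (star x * x) :=
  Real.sq_sqrt (hφ.star_mul_self_nonneg x)

lemma sq_tracialSeminorm_of_isStarProjection (hφ : IsPositiveTrace φ) (hq : IsStarProjection q) :
    tracialSeminorm φ q ^ 2 = φ q := by
  rw [hφ.sq_tracialSeminorm, hq.isSelfAdjoint.star_eq, hq.isIdempotentElem.eq]

lemma map_mul_star_mul_self_mul (hφ : IsPositiveTrace φ) (hq : IsStarProjection q) (x : R) :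
    φ (star (x * q) * (x * q)) = φ (star x * x * q) := by
  rw [star_mul, hq.isSelfAdjoint.star_eq, mul_assoc, hφ.mul_comm]
  simp only [mul_assoc, hq.isIdempotentElem.eq]

lemma map_star_mul_self_mul_nonneg (hφ : IsPositiveTrace φ) (hq : IsStarProjection q) (x : R) :
    0 ≤ φ (star x * x * q) :=
  hφ.map_mul_star_mul_self_mul hq x ▸ hφ.star_mul_self_nonneg (x * q)

lemma map_mul_le_right (hφ : IsPositiveTrace φ) (hp : IsStarProjection p)
    (hq : IsStarProjection q) : φ (p * q) ≤ φ q := by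
  have hsq : star (q - p * q) * (q - p * q) = q - q * (p * q) := by
    simp only [star_sub, star_mul, hp.isSelfAdjoint.star_eq, hq.isSelfAdjoint.star_eq, sub_mul,
      mul_sub, mul_assoc, hq.isIdempotentElem.eq, hp.isIdempotentElem.mul_self_mul]
    abel
  have hnonneg := hφ.star_mul_self_nonneg (q - p * q)
  rw [hsq, map_sub, hφ.mul_comm q, mul_assoc, hq.isIdempotentElem.eq] at hnonneg
  linarith

lemma sq_tracialSeminorm_lie (hφ : IsPositiveTrace φ) (hq : IsStarProjection q) (x : R) :
    tracialSeminorm φ ⁅x, q⁆ ^ 2 =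
      φ (star x * x * q) + φ (x * star x * q) - 2 * φ (star x * q * x * q) := by
  have hexpand : star ⁅x, q⁆ * ⁅x, q⁆ =
      star (x * q) * (x * q) - q * (star x * q * x) - star x * q * x * q
        + star x * (q * q * x) := by
    simp only [Ring.lie_def, star_sub, star_mul, hq.isSelfAdjoint.star_eq]
    noncomm_ring
  rw [hφ.sq_tracialSeminorm, hexpand, hq.isIdempotentElem.eq, map_add, map_sub, map_sub,
    hφ.map_mul_star_mul_self_mul hq, hφ.mul_comm q, hφ.mul_comm (star x), mul_assoc q,
    hφ.mul_comm q]
  ring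

lemma map_star_mul_mul_mul_le (hφ : IsPositiveTrace φ) (hq : IsStarProjection q) (x : R) :
    φ (star x * q * x * q) ≤ φ (x * star x * q) := by
  have hsq : star (q * x - q * x * q) * (q * x - q * x * q) =
      star x * (q * x) - star x * q * x * q - q * (star x * q * x - star x * q * x * q) := by
    simp only [star_sub, star_mul, hq.isSelfAdjoint.star_eq, sub_mul, mul_sub, mul_assoc,
      hq.isIdempotentElem.mul_self_mul]
    abel
  have hnonneg := hφ.star_mul_self_nonneg (q * x - q * x * q)
  rw [hsq, map_sub, map_sub, hφ.mul_comm q, sub_mul, mul_assoc _ q q, hq.isIdempotentElem.eq,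
    sub_self, map_zero, hφ.mul_comm (star x), mul_assoc q, hφ.mul_comm q] at hnonneg
  linarith

lemma map_star_mul_self_mul_le (hφ : IsPositiveTrace φ) (hq : IsStarProjection q) (x : R) :
    φ (star x * x * q) ≤ φ (x * star x * q) + tracialSeminorm φ ⁅x, q⁆ ^ 2 := by
  linarith [hφ.sq_tracialSeminorm_lie hq x, hφ.map_star_mul_mul_mul_le hq x]

lemma sq_tracialSeminorm_mul_mul (hφ : IsPositiveTrace φ) (hp : IsStarProjection p)
    (hq : IsStarProjection q) :
    tracialSeminorm φ (p * q * p) ^ 2 =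
      φ (p * q) - tracialSeminorm φ ⁅p, q⁆ ^ 2 / 2 := by
  have hlie := hφ.sq_tracialSeminorm_lie hq p
  have hcorner : φ (star (p * q * p) * (p * q * p)) = φ (p * q * p * q) :=
    calc φ (star (p * q * p) * (p * q * p))
        = φ (q * (p * p * q * p)) := by
          rw [hφ.map_mul_star_mul_self_mul hp, star_mul, hp.isSelfAdjoint.star_eq,
            hq.isSelfAdjoint.star_eq]
          simp only [mul_assoc]
      _ = φ (p * q * p * q) := by rw [hp.isIdempotentElem.eq, hφ.mul_comm]
  rw [hp.isSelfAdjoint.star_eq, hp.isIdempotentElem.eq] at hlie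
  rw [hφ.sq_tracialSeminorm, hcorner, hlie]
  ring

lemma sq_tracialSeminorm_mul_mul_le (hφ : IsPositiveTrace φ) (hp : IsStarProjection p)
    (hq : IsStarProjection q) :
    tracialSeminorm φ (p * q * p) ^ 2 ≤ tracialSeminorm φ q ^ 2 := by
  rw [hφ.sq_tracialSeminorm_mul_mul hp hq, hφ.sq_tracialSeminorm_of_isStarProjection hq]
  linarith [hφ.map_mul_le_right hp hq, sq_nonneg (tracialSeminorm φ ⁅p, q⁆)]

end NonUnitalRing

section Ring

variable {R : Type*} [Ring R] [StarRing R] {φ : R →+ ℝ} {p q : R}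
  {ι : Type*} [Fintype ι] {v : ι → R}

-- With `a = vᵢ vᵢ*`, both `p - 2a + a² = (p - a)²` and
-- `a - a² = vᵢ (1 - vᵢ* vᵢ) vᵢ* = ∑_{j ≠ i} (vⱼ vᵢ*)* (vⱼ vᵢ*)` are positive.
lemma map_mul_star_self_mul_le (hφ : IsPositiveTrace φ) (hp : IsStarProjection p)
    (hq : IsStarProjection q) (hv : ∑ i, star (v i) * v i = 1) (hpv : ∀ i, p * v i = v i)
    (i : ι) : φ (v i * star (v i) * q) ≤ φ (p * q) := by
  set a := v i * star (v i) with ha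
  have ha_star : star a = a := (IsSelfAdjoint.mul_star_self (v i)).star_eq
  have hpa : p * a = a := by rw [ha, ← mul_assoc, hpv]
  have hap : a * p = a := by
    simpa only [star_mul, ha_star, hp.isSelfAdjoint.star_eq] using congr(star $hpa)
  have hsq_sub : 0 ≤ φ (p * q) - 2 * φ (a * q) + φ (a * a * q) := by
    have hsq : star (p - a) * (p - a) * q = p * q - a * q - a * q + a * a * q := by
      simp only [star_sub, ha_star, hp.isSelfAdjoint.star_eq, sub_mul, mul_sub,
        hp.isIdempotentElem.eq, hpa, hap]
      abel
    have hnonneg := hφ.map_star_mul_self_mul_nonneg hq (p - a)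
    rw [hsq, map_add, map_sub, map_sub] at hnonneg
    linarith
  have hsq_le : φ (a * a * q) ≤ φ (a * q) := by
    have hsum : a = ∑ j, star (v j * star (v i)) * (v j * star (v i)) := by
      simp only [star_mul, star_star, mul_assoc, ← Finset.mul_sum]
      simp only [← mul_assoc, ← Finset.sum_mul, hv]
      rw [mul_one]
    calc φ (a * a * q)
        = φ (star (v i * star (v i)) * (v i * star (v i)) * q) := by rw [← ha, ha_star]
      _ ≤ ∑ j, φ (star (v j * star (v i)) * (v j * star (v i)) * q) :=
          Finset.single_le_sum (fun j _ ↦ hφ.map_star_mul_self_mul_nonneg hq (v j * star (v i)))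
            (Finset.mem_univ i)
      _ = φ (a * q) := by rw [← map_sum, ← Finset.sum_mul, ← hsum]
  linarith

lemma map_le_card_mul_add_sum_sq_lie (hφ : IsPositiveTrace φ) (hp : IsStarProjection p)
    (hq : IsStarProjection q) (hv : ∑ i, star (v i) * v i = 1) (hpv : ∀ i, p * v i = v i) :
    φ q ≤ Fintype.card ι * φ (p * q) + ∑ i, tracialSeminorm φ ⁅v i, q⁆ ^ 2 :=
  calc φ q = ∑ i, φ (star (v i) * v i * q) := by
        rw [← map_sum, ← Finset.sum_mul, hv, one_mul]
    _ ≤ ∑ i, (φ (p * q) + tracialSeminorm φ ⁅v i, q⁆ ^ 2) := by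
        gcongr with i
        exact (hφ.map_star_mul_self_mul_le hq (v i)).trans <|
          add_le_add_left (hφ.map_mul_star_self_mul_le hp hq hv hpv i) _
    _ = Fintype.card ι * φ (p * q) + ∑ i, tracialSeminorm φ ⁅v i, q⁆ ^ 2 := by
        rw [Finset.sum_add_distrib, Finset.sum_const, Finset.card_univ, nsmul_eq_mul]

lemma le_sq_tracialSeminorm_mul_mul_div (hφ : IsPositiveTrace φ) (hp : IsStarProjection p)
    (hq : IsStarProjection q) (hq_pos : 0 < φ q) (hv : ∑ i, star (v i) * v i = 1)
    (hpv : ∀ i, p * v i = v i) :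
    (1 - ∑ i, (tracialSeminorm φ ⁅v i, q⁆ / tracialSeminorm φ q) ^ 2) / Fintype.card ι
        - (tracialSeminorm φ ⁅p, q⁆ / tracialSeminorm φ q) ^ 2 / 2 ≤
      tracialSeminorm φ (p * q * p) ^ 2 / tracialSeminorm φ q ^ 2 := by
  have hcorner : φ (p * q) / φ q = tracialSeminorm φ (p * q * p) ^ 2 / φ q
      + tracialSeminorm φ ⁅p, q⁆ ^ 2 / φ q / 2 := by
    rw [hφ.sq_tracialSeminorm_mul_mul hp hq]
    ring
  have hcorner_nonneg : 0 ≤ φ (p * q) / φ q := by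
    rw [hcorner]
    positivity
  have hsum : 1 - (∑ i, tracialSeminorm φ ⁅v i, q⁆ ^ 2) / φ q ≤
      φ (p * q) / φ q * Fintype.card ι := by
    rw [one_sub_div hq_pos.ne', div_mul_eq_mul_div, div_le_div_iff_of_pos_right hq_pos]
    linarith [hφ.map_le_card_mul_add_sum_sq_lie hp hq hv hpv]
  simp only [div_pow, hφ.sq_tracialSeminorm_of_isStarProjection hq, ← Finset.sum_div]
  rw [sub_le_iff_le_add, ← hcorner]
  exact div_le_of_le_mul₀ (Nat.cast_nonneg _) hcorner_nonneg hsum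

end Ring

end IsPositiveTrace

/-- The real part of a linear functional, as an additive map; for a tracial state it is a positive
trace whose `tracialSeminorm` is `traceNorm2`. -/
def reFunctional {A : Type*} [AddCommMonoid A] [Module ℂ A] (τ : A →ₗ[ℂ] ℂ) : A →+ ℝ :=
  Complex.reAddGroupHom.comp τ.toAddMonoidHom

lemma isPositiveTrace_reFunctional {A : Type*} [NonUnitalRing A] [StarRing A] [Module ℂ A]
    {τ : A →ₗ[ℂ] ℂ} (hpos : ∀ x, 0 ≤ (τ (star x * x)).re) (hcomm : ∀ x y, τ (x * y) = τ (y * x)) :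
    IsPositiveTrace (reFunctional τ) :=
  ⟨hpos, fun x y ↦ congrArg Complex.re (hcomm x y)⟩

lemma tracialSeminorm_reFunctional {A : Type*} [NormedRing A] [StarRing A] [NormedAlgebra ℂ A]
    (τ : A →ₗ[ℂ] ℂ) : tracialSeminorm (reFunctional τ) = traceNorm2 τ :=
  rfl

theorem liminf_corner_mass_ge_general {R : Type*} [Ring R] [StarRing R] {φ : R →+ ℝ}
    (hφ : IsPositiveTrace φ) {ι : Type*} [Fintype ι] {v : ι → R}
    (hv : ∑ i, star (v i) * v i = 1) {κ : Type*} {l : Filter κ} [l.NeBot] {q : κ → R}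
    (hq : ∀ k, IsStarProjection (q k)) (hq_pos : ∀ k, 0 < φ (q k))
    (hv_lim : ∀ i, Tendsto (fun k ↦ tracialSeminorm φ ⁅v i, q k⁆ / tracialSeminorm φ (q k))
      l (𝓝 0))
    {p : R} (hp : IsStarProjection p) (hpv : ∀ i, p * v i = v i)
    (hp_lim : Tendsto (fun k ↦ tracialSeminorm φ ⁅p, q k⁆ / tracialSeminorm φ (q k)) l (𝓝 0)) :
    (1 : ℝ) / Fintype.card ι ≤
      liminf (fun k ↦ tracialSeminorm φ (p * q k * p) ^ 2 / tracialSeminorm φ (q k) ^ 2) l := by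
  have hlower_lim : Tendsto (fun k ↦
      (1 - ∑ i, (tracialSeminorm φ ⁅v i, q k⁆ / tracialSeminorm φ (q k)) ^ 2) / Fintype.card ι
        - (tracialSeminorm φ ⁅p, q k⁆ / tracialSeminorm φ (q k)) ^ 2 / 2)
      l (𝓝 ((1 : ℝ) / Fintype.card ι)) := by
    simpa using (((tendsto_finsetSum _ fun i _ ↦ (hv_lim i).pow 2).const_sub 1).div_const
      (Fintype.card ι : ℝ)).sub ((hp_lim.pow 2).div_const 2)
  have hle_one (k : κ) :
      tracialSeminorm φ (p * q k * p) ^ 2 / tracialSeminorm φ (q k) ^ 2 ≤ 1 :=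
    div_le_one_of_le₀ (hφ.sq_tracialSeminorm_mul_mul_le hp (hq k)) (sq_nonneg _)
  rw [← hlower_lim.liminf_eq]
  exact liminf_le_liminf
    (.of_forall fun k ↦ hφ.le_sq_tracialSeminorm_mul_mul_div hp (hq k) (hq_pos k) hv hpv)
    hlower_lim.isBoundedUnder_ge
    (isBoundedUnder_of ⟨1, hle_one⟩).isCoboundedUnder_ge

/-- If the matrix units `pm i j` of an `m × m` system all asymptotically
commute with the projections `q k`, and `p` is a projection with `p ≥ p₁₁`
asymptotically commuting with the `q k`, then
`liminf ‖p q_k p‖₂² / ‖q_k‖₂² ≥ 1/m`. -/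
theorem liminf_corner_mass_ge
    {A : Type*} [NormedRing A] [StarRing A] [CStarRing A] [CompleteSpace A]
    [NormedAlgebra ℂ A] [StarModule ℂ A]
    (τ : A →ₗ[ℂ] ℂ)
    (hτ1 : τ 1 = 1)
    (hτpos : ∀ x : A, 0 ≤ (τ (star x * x)).re)
    (hτreal : ∀ x : A, (τ (star x * x)).im = 0)
    (hτtr : ∀ x y : A, τ (x * y) = τ (y * x))
    (m : ℕ) (hm : 0 < m) (pm : Fin m → Fin m → A)
    (hpm_mul : ∀ i j l r, pm i j * pm l r = if j = l then pm i r else 0)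
    (hpm_star : ∀ i j, star (pm i j) = pm j i)
    (hpm_sum : ∑ i, pm i i = 1)
    (q : ℕ → A)
    (hq_sa : ∀ k, star (q k) = q k)
    (hq_idem : ∀ k, q k * q k = q k)
    (hq_pos : ∀ k, 0 < (τ (q k)).re)
    (hpm_lim : ∀ i j, Tendsto
      (fun k => traceNorm2 τ (pm i j * q k - q k * pm i j) / traceNorm2 τ (q k))
      atTop (𝓝 0))
    (p : A) (hp_sa : star p = p) (hp_idem : p * p = p)
    (hp_ge : p * pm ⟨0, hm⟩ ⟨0, hm⟩ = pm ⟨0, hm⟩ ⟨0, hm⟩)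
    (hp_lim : Tendsto (fun k => traceNorm2 τ (p * q k - q k * p) / traceNorm2 τ (q k))
      atTop (𝓝 0)) :
    (1 : ℝ) / m ≤
      Filter.liminf
        (fun k => (traceNorm2 τ (p * q k * p)) ^ 2 / (traceNorm2 τ (q k)) ^ 2)
        atTop := by
  have hpm_col : ∑ i, star (pm ⟨0, hm⟩ i) * pm ⟨0, hm⟩ i = 1 := by
    simp only [hpm_star, hpm_mul, if_true, hpm_sum]
  have hp_row (i : Fin m) : p * pm ⟨0, hm⟩ i = pm ⟨0, hm⟩ i := by
    simpa only [mul_assoc, hpm_mul, if_true] using congr($hp_ge * pm ⟨0, hm⟩ i)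
  simpa only [Fintype.card_fin, tracialSeminorm_reFunctional] using
    liminf_corner_mass_ge_general (isPositiveTrace_reFunctional hτpos hτtr) hpm_col
      (fun k ↦ ⟨hq_idem k, hq_sa k⟩) hq_pos (hpm_lim ⟨0, hm⟩) ⟨hp_idem, hp_sa⟩ hp_row hp_lim
end
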